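/- arXiv:1212.3567 — 4 statements merged into one kernel-verified Lean document; each statement's English description precedes it below -/
import Mathlib

section
/- Let (Ω, 𝓕, P) be a probability space, T > 0 and k ≥ 1. For each integer n ≥ 1 let X_n = {X_n(t)}_{t∈[0,T]} be a stochastic process with càdlàg paths taking values in ℝ^k, and let (a_n)_{n≥1} be a sequence of positive real numbers with a_n → 0. Fix ε > 0 and define for each n the hitting time τ_{nε}(ω) := inf{ t ∈ [0,T] : |X_n(t,ω)| ≥ ε } (with inf ∅ := T) and the stopped process X_{nε}(t) := X_n(t ∧ τ_{nε}). If sup_{t∈[0,T]} |X_{nε}(t)| = 𝒪(a_n), then sup_{t∈[0,T]} |X_n(t)| = 𝒪(a_n). -/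
open MeasureTheory ProbabilityTheory Filter Set

theorem stopped_aux {E : Type*} [NormedAddCommGroup E] (T : ℝ) (hT : 0 < T) (x : ℝ → E)
    (hrc : ∀ t ∈ Set.Ico (0:ℝ) T, ContinuousWithinAt x (Set.Ici t) t)
    (ε : ℝ) (hε : 0 < ε) (τ : ℝ)
    (hτ : τ = sInf ({t ∈ Set.Icc (0:ℝ) T | ε ≤ ‖x t‖} ∪ {T}))
    (h : (⨆ t ∈ Set.Icc (0:ℝ) T, ‖x (min t τ)‖) < ε) : τ = T := by
  set A : Set ℝ := {t ∈ Set.Icc (0:ℝ) T | ε ≤ ‖x t‖} ∪ {T} with hA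
  have hA0 : ∀ t ∈ A, 0 ≤ t := by
    rintro t (ht | ht)
    · exact ht.1.1
    · rw [Set.mem_singleton_iff] at ht
      rw [ht]; exact hT.le
  have hbdd : BddBelow A := ⟨0, hA0⟩
  have hTA : T ∈ A := Or.inr rfl
  have hne : A.Nonempty := ⟨T, hTA⟩
  have hτ0 : 0 ≤ τ := by rw [hτ]; exact le_csInf hne hA0
  have hτT : τ ≤ T := by rw [hτ]; exact csInf_le hbdd hTA
  have hlt : ∀ t, 0 ≤ t → t < τ → ‖x t‖ < ε := by
    intro t h0 h1
    by_contra hc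
    push Not at hc
    have : τ ≤ t := by
      rw [hτ]; exact csInf_le hbdd (Or.inl ⟨⟨h0, h1.le.trans hτT⟩, hc⟩)
    linarith
  have hxτ : ‖x τ‖ < ε := by
    refine lt_of_le_of_lt ?_ h
    have hB : BddAbove (Set.range fun t => ⨆ (_ : t ∈ Set.Icc (0:ℝ) T), ‖x (min t τ)‖) := by
      refine ⟨max ε ‖x τ‖, ?_⟩
      rintro _ ⟨t, rfl⟩
      have hp : 0 ≤ max ε ‖x τ‖ := hε.le.trans (le_max_left _ _)
      refine Real.iSup_le (fun ht => ?_) hp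
      rcases lt_or_ge t τ with h1 | h1
      · rw [min_eq_left h1.le]
        exact (hlt t ht.1 h1).le.trans (le_max_left _ _)
      · rw [min_eq_right h1]; exact le_max_right _ _
    have h2 := le_ciSup hB T
    have hm : T ∈ Set.Icc (0:ℝ) T := ⟨hT.le, le_rfl⟩
    simp only [ciSup_pos hm, min_eq_right hτT] at h2
    exact h2
  by_contra hneT
  have hτlt : τ < T := lt_of_le_of_ne hτT hneT
  have hc := (hrc τ ⟨hτ0, hτlt⟩).norm
  have hev : ∀ᶠ s in nhdsWithin τ (Set.Ici τ), ‖x s‖ < ε ∧ s < T :=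
    (hc.eventually (gt_mem_nhds hxτ)).and
      (mem_nhdsWithin_of_mem_nhds (gt_mem_nhds hτlt))
  obtain ⟨u, hu, hus⟩ := (mem_nhdsGE_iff_exists_Ico_subset).1 hev
  obtain ⟨s, hsA, hsu⟩ := exists_lt_of_csInf_lt hne (hτ ▸ hu : sInf A < u)
  have hτs : τ ≤ s := by rw [hτ]; exact csInf_le hbdd hsA
  have h3 := hus ⟨hτs, hsu⟩
  rcases hsA with h4 | h4
  · exact absurd h4.2 (not_le.2 h3.1)
  · exact absurd h4 h3.2.ne

/-- If the stopped processes `X_{nε}` (stopped at the hitting time of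
level `ε`) satisfy `sup_{t ∈ [0,T]} |X_{nε}(t)| = 𝒪(a_n)` (in the almost sure sense, with
an almost surely finite random constant), then `sup_{t ∈ [0,T]} |X_n(t)| = 𝒪(a_n)`. -/
theorem stopped_sup_bigO
    {Ω : Type*} [MeasureSpace Ω] [IsProbabilityMeasure (ℙ : Measure Ω)]
    (T : ℝ) (hT : 0 < T) (k : ℕ) (hk : 1 ≤ k)
    (X : ℕ → ℝ → Ω → EuclideanSpace ℝ (Fin k))
    -- càdlàg paths: right-continuity on [0,T)
    (hrc : ∀ n ω, ∀ t ∈ Set.Ico (0:ℝ) T,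
      ContinuousWithinAt (fun s => X n s ω) (Set.Ici t) t)
    -- càdlàg paths: existence of left limits on (0,T]
    (hll : ∀ n ω, ∀ t ∈ Set.Ioc (0:ℝ) T,
      ∃ l, Tendsto (fun s => X n s ω) (nhdsWithin t (Set.Iio t)) (nhds l))
    -- the positive numerical sequence aₙ with aₙ → 0
    (a : ℕ → ℝ) (ha : ∀ n, 1 ≤ n → 0 < a n) (ha0 : Tendsto a atTop (nhds 0))
    (ε : ℝ) (hε : 0 < ε)
    -- hitting time of level ε, with inf ∅ := T
    (τ : ℕ → Ω → ℝ)
    (hτ : ∀ n ω, τ n ω = sInf ({t ∈ Set.Icc (0:ℝ) T | ε ≤ ‖X n t ω‖} ∪ {T}))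
    -- sup of the stopped process is 𝒪(aₙ)
    (h : ∃ ζ : Ω → ℝ, (∀ ω, 0 ≤ ζ ω) ∧ ∀ n : ℕ, 1 ≤ n → ∀ᵐ ω ∂(ℙ : Measure Ω),
      (⨆ t ∈ Set.Icc (0:ℝ) T, ‖X n (min t (τ n ω)) ω‖) ≤ ζ ω * a n) :
    ∃ ζ : Ω → ℝ, (∀ ω, 0 ≤ ζ ω) ∧ ∀ n : ℕ, 1 ≤ n → ∀ᵐ ω ∂(ℙ : Measure Ω),
      (⨆ t ∈ Set.Icc (0:ℝ) T, ‖X n t ω‖) ≤ ζ ω * a n := by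
  obtain ⟨ζ, hζ0, hζ⟩ := h
  have key : ∀ ω, ∃ Z : ℝ, 0 ≤ Z ∧ ((∀ n : ℕ, 1 ≤ n →
      (⨆ t ∈ Set.Icc (0:ℝ) T, ‖X n (min t (τ n ω)) ω‖) ≤ ζ ω * a n) →
      ∀ n : ℕ, 1 ≤ n → (⨆ t ∈ Set.Icc (0:ℝ) T, ‖X n t ω‖) ≤ Z * a n) := by
    intro ω
    have hlim : Tendsto (fun n => ζ ω * a n) atTop (nhds 0) := by
      simpa using ha0.const_mul (ζ ω)
    obtain ⟨N, hN⟩ := eventually_atTop.1 (hlim.eventually (gt_mem_nhds hε))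
    set S : ℕ → ℝ := fun n => ⨆ t ∈ Set.Icc (0:ℝ) T, ‖X n t ω‖ with hS
    have hsum : 0 ≤ ∑ m ∈ Finset.range N, |S m / a m| :=
      Finset.sum_nonneg fun _ _ => abs_nonneg _
    refine ⟨ζ ω + ∑ m ∈ Finset.range N, |S m / a m|, add_nonneg (hζ0 ω) hsum, ?_⟩
    intro hg n hn
    have han := ha n hn
    rcases lt_or_ge n N with hnN | hnN
    · have h1 : |S n / a n| ≤ ∑ m ∈ Finset.range N, |S m / a m| :=
        Finset.single_le_sum (f := fun m => |S m / a m|) (fun _ _ => abs_nonneg _)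
          (Finset.mem_range.2 hnN)
      have h2 : S n / a n ≤ ζ ω + ∑ m ∈ Finset.range N, |S m / a m| := by
        have := le_abs_self (S n / a n)
        have := hζ0 ω
        linarith
      exact (div_le_iff₀ han).1 h2
    · have hT' : τ n ω = T := stopped_aux T hT (fun t => X n t ω) (hrc n ω) ε hε (τ n ω)
        (hτ n ω) ((hg n hn).trans_lt (hN n hnN))
      have h1 := hg n hn
      have h2 : (⨆ t ∈ Set.Icc (0:ℝ) T, ‖X n (min t (τ n ω)) ω‖)
          = ⨆ t ∈ Set.Icc (0:ℝ) T, ‖X n t ω‖ := by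
        refine iSup_congr fun t => iSup_congr fun ht => ?_
        rw [hT', min_eq_left ht.2]
      rw [h2] at h1
      refine h1.trans (mul_le_mul_of_nonneg_right ?_ han.le)
      linarith
  choose Z hZ0 hZ using key
  have hall : ∀ᵐ ω ∂(ℙ : Measure Ω), ∀ n : ℕ, 1 ≤ n →
      (⨆ t ∈ Set.Icc (0:ℝ) T, ‖X n (min t (τ n ω)) ω‖) ≤ ζ ω * a n := by
    rw [ae_all_iff]
    intro n
    by_cases hn : 1 ≤ n
    · filter_upwards [hζ n hn] with ω hω _ using hω
    · exact Eventually.of_forall fun ω h => absurd h hn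
  refine ⟨Z, hZ0, fun n hn => ?_⟩
  filter_upwards [hall] with ω hω using hZ ω hω n hn
end

section
/- Let (Ω, 𝓕, P) be a probability space equipped with a filtration (𝓕_t)_{t∈[0,T]}, where T ∈ [0,∞). Let f = {f_t}_{t∈[0,T]} and g = {g_t}_{t∈[0,T]} be nonnegative continuous adapted real-valued processes such that for every constant c > 0 and every stopping time τ with τ ≤ T almost surely one has E[ f_τ · 1_{{g_0 ≤ c}} ] ≤ E[ g_τ · 1_{{g_0 ≤ c}} ]. Then for every stopping time τ ≤ T and every γ ∈ (0,1), E[ sup_{t ≤ τ} f_t^γ ] ≤ ((2−γ)/(1−γ)) · E[ sup_{t ≤ τ} g_t^γ ]. -/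
open MeasureTheory Filter Set

/-- Clamping commutes with dense rationals: strict exceedance on `[0,a]` is seen at clamped rationals. -/
lemma LD.exists_gt_iff {φ : ℝ → ℝ} {a y : ℝ} (ha : 0 ≤ a) (hc : ContinuousOn φ (Icc 0 a)) :
    (∃ t ∈ Icc (0:ℝ) a, y < φ t) ↔ ∃ q : ℚ, y < φ (max 0 (min (q:ℝ) a)) := by
  have hmem : ∀ t : ℝ, max 0 (min t a) ∈ Icc (0:ℝ) a := fun t =>
    ⟨le_max_left _ _, max_le ha (min_le_right _ _)⟩
  constructor
  · rintro ⟨t, ht, hy⟩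
    have hcont : Continuous (fun t : ℝ => φ (max 0 (min t a))) :=
      hc.comp_continuous (by fun_prop) hmem
    have ho : IsOpen {t : ℝ | y < φ (max 0 (min t a))} := isOpen_lt continuous_const hcont
    obtain ⟨q, hq⟩ := (Rat.denseRange_cast (𝕜 := ℝ)).exists_mem_open ho
      ⟨t, by simpa [min_eq_left ht.2, max_eq_right ht.1] using hy⟩
    exact ⟨q, hq⟩
  · rintro ⟨q, hq⟩
    exact ⟨_, hmem q, hq⟩

lemma LD.exists_ge_iff {φ : ℝ → ℝ} {a x : ℝ} (ha : 0 ≤ a) (hc : ContinuousOn φ (Icc 0 a)) :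
    (∃ t ∈ Icc (0:ℝ) a, x ≤ φ t) ↔
      ∀ n : ℕ, ∃ q : ℚ, x - 1 / ((n:ℝ) + 1) < φ (max 0 (min (q:ℝ) a)) := by
  constructor
  · rintro ⟨t, ht, hx⟩ n
    rw [← LD.exists_gt_iff ha hc]
    have : 0 < 1 / ((n:ℝ) + 1) := by positivity
    exact ⟨t, ht, by linarith⟩
  · intro h
    obtain ⟨t, ht, hmax⟩ := isCompact_Icc.exists_isMaxOn (nonempty_Icc.2 ha) hc
    refine ⟨t, ht, ?_⟩
    by_contra! hlt
    obtain ⟨n, hn⟩ := exists_nat_one_div_lt (sub_pos.2 hlt)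
    have h1 := h n
    rw [← LD.exists_gt_iff ha hc] at h1
    obtain ⟨s, hs, hs'⟩ := h1
    have := hmax hs
    simp only [mem_ofPred_eq] at this
    linarith

/-- The real supremum appearing in the statement is a maximum. -/
lemma LD.sup_spec {φ : ℝ → ℝ} {a : ℝ} (ha : 0 ≤ a) (hc : ContinuousOn φ (Icc 0 a))
    (h0 : ∀ t ∈ Icc (0:ℝ) a, 0 ≤ φ t) :
    (∀ t ∈ Icc (0:ℝ) a, φ t ≤ ⨆ t ∈ Icc (0:ℝ) a, φ t) ∧
      ∃ t ∈ Icc (0:ℝ) a, φ t = ⨆ t ∈ Icc (0:ℝ) a, φ t := by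
  obtain ⟨t, ht, hmax⟩ := isCompact_Icc.exists_isMaxOn (nonempty_Icc.2 ha) hc
  have hle : ∀ s, (⨆ (_ : s ∈ Icc (0:ℝ) a), φ s) ≤ φ t := by
    intro s
    by_cases hs : s ∈ Icc (0:ℝ) a
    · rw [ciSup_pos hs]; exact hmax hs
    · have : IsEmpty (s ∈ Icc (0:ℝ) a) := ⟨hs⟩
      rw [Real.iSup_of_isEmpty]; exact h0 t ht
  have hb : BddAbove (range fun s => ⨆ (_ : s ∈ Icc (0:ℝ) a), φ s) :=
    ⟨φ t, by rintro _ ⟨s, rfl⟩; exact hle s⟩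
  have hup : ∀ s ∈ Icc (0:ℝ) a, φ s ≤ ⨆ t ∈ Icc (0:ℝ) a, φ t := by
    intro s hs
    have := le_ciSup hb s
    simp only [ciSup_pos hs] at this
    exact this
  exact ⟨hup, t, ht, le_antisymm (hup t ht) (ciSup_le hle)⟩

/-- Measurability of the running maximum up to a measurable random time. -/
lemma LD.measurable_sup {Ω : Type*} {mΩ : MeasurableSpace Ω} {T : ℝ} (hT : 0 ≤ T)
    {f : ℝ → Ω → ℝ} {τ : Ω → ℝ}
    (hf0 : ∀ t ∈ Icc (0:ℝ) T, ∀ ω, 0 ≤ f t ω)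
    (hfc : ∀ ω, ContinuousOn (fun t => f t ω) (Icc 0 T))
    (hfm : ∀ t ∈ Icc (0:ℝ) T, Measurable (f t))
    (hτ : Measurable τ) (hτm : ∀ ω, τ ω ∈ Icc (0:ℝ) T) :
    Measurable (fun ω => ⨆ t ∈ Icc (0:ℝ) (τ ω), f t ω) := by
  have hmem : ∀ t : ℝ, max 0 (min t T) ∈ Icc (0:ℝ) T := fun t =>
    ⟨le_max_left _ _, max_le hT (min_le_right _ _)⟩
  have hunc : Measurable (Function.uncurry (fun t : ℝ => f (max 0 (min t T)))) :=
    measurable_uncurry_of_continuous_of_measurable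
      (fun ω => (hfc ω).comp_continuous (by fun_prop) hmem) (fun t => hfm _ (hmem t))
  have hsub : ∀ ω, Icc (0:ℝ) (τ ω) ⊆ Icc 0 T := fun ω => Icc_subset_Icc_right (hτm ω).2
  refine measurable_of_Ioi fun y => ?_
  have : (fun ω => ⨆ t ∈ Icc (0:ℝ) (τ ω), f t ω) ⁻¹' Ioi y =
      ⋃ q : ℚ, {ω | y < f (max 0 (min (max 0 (min (q:ℝ) (τ ω))) T)) ω} := by
    ext ω
    have hs := LD.sup_spec (hτm ω).1 ((hfc ω).mono (hsub ω))
      (fun t ht => hf0 t (hsub ω ht) ω)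
    have h2 := LD.exists_gt_iff (y := y) (hτm ω).1 ((hfc ω).mono (hsub ω))
    have h3 : ∀ q : ℚ, max 0 (min (max 0 (min (q:ℝ) (τ ω))) T) = max 0 (min (q:ℝ) (τ ω)) := by
      intro q
      rw [min_eq_left, max_eq_right (le_max_left _ _)]
      exact max_le hT ((min_le_right _ _).trans (hτm ω).2)
    simp only [mem_preimage, mem_Ioi, mem_iUnion, mem_ofPred_eq, h3]
    rw [← h2]
    constructor
    · intro h
      obtain ⟨t, ht, he⟩ := hs.2
      exact ⟨t, ht, by rw [he]; exact h⟩
    · rintro ⟨t, ht, he⟩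
      exact lt_of_lt_of_le he (hs.1 t ht)
  rw [this]
  refine MeasurableSet.iUnion fun q => ?_
  have hm : Measurable (fun ω => (max 0 (min (q:ℝ) (τ ω)), ω)) := by fun_prop
  exact measurableSet_lt measurable_const (hunc.comp hm)

/-- First time that `φ` reaches `x`, capped by `a`. -/
noncomputable def LD.hit (T x : ℝ) (φ : ℝ → ℝ) (a : ℝ) : ℝ :=
  sInf ({t | t ∈ Icc (0:ℝ) T ∧ x ≤ φ t} ∪ {a})

lemma LD.hit_spec {T x a : ℝ} {φ : ℝ → ℝ} (ha : a ∈ Icc (0:ℝ) T)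
    (hc : ContinuousOn φ (Icc 0 T)) :
    (LD.hit T x φ a ≤ a ∧ 0 ≤ LD.hit T x φ a) ∧
    (∀ t ∈ Icc (0:ℝ) T, x ≤ φ t → LD.hit T x φ a ≤ t) ∧
    (x ≤ φ (LD.hit T x φ a) ∨ LD.hit T x φ a = a) := by
  have hcl : IsClosed ({t | t ∈ Icc (0:ℝ) T ∧ x ≤ φ t} ∪ {a}) := by
    refine IsClosed.union ?_ isClosed_singleton
    exact hc.preimage_isClosed_of_isClosed isClosed_Icc isClosed_Ici
  have hne : ({t | t ∈ Icc (0:ℝ) T ∧ x ≤ φ t} ∪ {a}).Nonempty := ⟨a, Or.inr rfl⟩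
  have hb : ∀ t ∈ ({t | t ∈ Icc (0:ℝ) T ∧ x ≤ φ t} ∪ {a}), 0 ≤ t := by
    rintro t (h | h)
    · exact h.1.1
    · rw [h]; exact ha.1
  have hbb : BddBelow ({t | t ∈ Icc (0:ℝ) T ∧ x ≤ φ t} ∪ {a}) := ⟨0, hb⟩
  refine ⟨⟨csInf_le hbb (Or.inr rfl), le_csInf hne hb⟩,
    fun t ht hx => csInf_le hbb (Or.inl ⟨ht, hx⟩), ?_⟩
  rcases hcl.csInf_mem hne hbb with h | h
  · exact Or.inl h.2
  · exact Or.inr h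

lemma LD.hit_stopping {Ω : Type*} {mΩ : MeasurableSpace Ω} {T x : ℝ}
    {𝓕 : Filtration ℝ mΩ} {h : ℝ → Ω → ℝ} {τ : Ω → ℝ}
    (hc : ∀ ω, ContinuousOn (fun t => h t ω) (Icc 0 T))
    (hm : ∀ t ∈ Icc (0:ℝ) T, Measurable[𝓕 t] (h t))
    (hτ : IsStoppingTime 𝓕 (fun ω => (τ ω : WithTop ℝ)))
    (hτm : ∀ ω, τ ω ∈ Icc (0:ℝ) T) :
    IsStoppingTime 𝓕 (fun ω => (LD.hit T x (fun t => h t ω) (τ ω) : WithTop ℝ)) := by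
  intro i
  have hτi := hτ i
  simp only [WithTop.coe_le_coe] at hτi ⊢
  rcases lt_or_ge i 0 with hi | hi
  · convert @MeasurableSet.empty _ (𝓕 i)
    ext ω
    have := (LD.hit_spec (x := x) (hτm ω) (hc ω)).1.2
    simp only [mem_ofPred_eq, mem_empty_iff_false, iff_false, not_le]
    linarith
  rcases le_or_gt T i with hi' | hi'
  · convert @MeasurableSet.univ _ (𝓕 i)
    ext ω
    have := (LD.hit_spec (x := x) (hτm ω) (hc ω)).1.1
    have := (hτm ω).2
    simp only [mem_ofPred_eq, mem_univ, iff_true]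
    linarith
  have hsub : Icc (0:ℝ) i ⊆ Icc 0 T := Icc_subset_Icc_right hi'.le
  have key : {ω | LD.hit T x (fun t => h t ω) (τ ω) ≤ i} =
      {ω | τ ω ≤ i} ∪ ⋂ n : ℕ, ⋃ q : ℚ,
        {ω | x - 1 / ((n:ℝ) + 1) < h (max 0 (min (q:ℝ) i)) ω} := by
    ext ω
    have hs := LD.hit_spec (x := x) (hτm ω) (hc ω)
    have h2 := LD.exists_ge_iff (x := x) hi ((hc ω).mono hsub)
    simp only [mem_ofPred_eq, mem_union, mem_iInter, mem_iUnion]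
    rw [← h2]
    constructor
    · intro hle
      rcases hs.2.2 with h3 | h3
      · exact Or.inr ⟨_, ⟨hs.1.2, hle⟩, h3⟩
      · left; rw [← h3]; exact hle
    · rintro (h3 | ⟨t, ht, h3⟩)
      · exact hs.1.1.trans h3
      · exact (hs.2.1 t (hsub ht) h3).trans ht.2
  rw [key]
  refine MeasurableSet.union hτi (MeasurableSet.iInter fun n => MeasurableSet.iUnion fun q => ?_)
  have hq : max 0 (min (q:ℝ) i) ∈ Icc (0:ℝ) i := ⟨le_max_left _ _, max_le hi (min_le_right _ _)⟩
  have hmq : Measurable[𝓕 i] (h (max 0 (min (q:ℝ) i))) :=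
    (hm _ (hsub hq)).mono (𝓕.mono hq.2) le_rfl
  exact hmq measurableSet_Ioi

/-- The deterministic integral in the layer-cake computation. -/
lemma LD.inner {γ : ℝ} (h0 : 0 < γ) (h1 : γ < 1) {G : ℝ} (hG : 0 ≤ G) :
    ∫⁻ t in Ioi (0:ℝ), ENNReal.ofReal (min G t * t ^ (γ - 2)) ≤
      ENNReal.ofReal ((1 / γ + 1 / (1 - γ)) * G ^ γ) := by
  rcases hG.eq_or_lt with rfl | hG
  · rw [setLIntegral_congr_fun (g := fun _ => 0) measurableSet_Ioi]
    · simp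
    · intro t ht
      simp [min_eq_left (le_of_lt (mem_Ioi.1 ht))]
  have hγ : 0 < 1 - γ := by linarith
  rw [← Ioc_union_Ioi_eq_Ioi hG.le]
  refine (lintegral_union_le _ _ _).trans ?_
  have e1 : ∫⁻ t in Ioc (0:ℝ) G, ENNReal.ofReal (min G t * t ^ (γ - 2)) =
      ENNReal.ofReal (G ^ γ / γ) := by
    rw [setLIntegral_congr_fun (g := fun t => ENNReal.ofReal (t ^ (γ - 1))) measurableSet_Ioc]
    · have hi := (intervalIntegral.intervalIntegrable_rpow' (a := 0) (b := G) (r := γ - 1)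
        (by linarith))
      rw [intervalIntegrable_iff_integrableOn_Ioc_of_le hG.le] at hi
      rw [← ofReal_integral_eq_lintegral_ofReal hi]
      · rw [← intervalIntegral.integral_of_le hG.le, integral_rpow (Or.inl (by linarith))]
        simp [Real.zero_rpow h0.ne']
      · filter_upwards [ae_restrict_mem measurableSet_Ioc] with t ht
        exact Real.rpow_nonneg ht.1.le _
    · intro t ht
      simp only [min_eq_right ht.2]
      congr 1
      rw [show γ - 1 = 1 + (γ - 2) by ring, Real.rpow_add ht.1, Real.rpow_one]
  have e2 : ∫⁻ t in Ioi G, ENNReal.ofReal (min G t * t ^ (γ - 2)) =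
      ENNReal.ofReal (G ^ γ / (1 - γ)) := by
    rw [setLIntegral_congr_fun (g := fun t => ENNReal.ofReal (G * t ^ (γ - 2))) measurableSet_Ioi]
    · have hi := (integrableOn_Ioi_rpow_of_lt (a := γ - 2) (by linarith) hG).const_mul G
      rw [← ofReal_integral_eq_lintegral_ofReal hi]
      · rw [integral_const_mul, integral_Ioi_rpow_of_lt (by linarith) hG]
        congr 1
        have : G ^ γ = G * G ^ (γ - 2 + 1) := by
          rw [show γ - 2 + 1 = γ - 1 by ring, Real.rpow_sub_one hG.ne']
          field_simp
        rw [this]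
        have h3 : γ - 2 + 1 ≠ 0 := by linarith
        rw [show γ - 2 + 1 = -(1 - γ) by ring]
        field_simp
      · filter_upwards [ae_restrict_mem measurableSet_Ioi] with t ht
        exact mul_nonneg hG.le (Real.rpow_nonneg (hG.le.trans (le_of_lt ht)) _)
    · intro t ht
      simp only [min_eq_left (le_of_lt (mem_Ioi.1 ht))]
  rw [e1, e2, ← ENNReal.ofReal_add (by positivity) (by positivity)]
  exact le_of_eq (by congr 1; ring)

/-- From the tail bound to the moment bound. -/
lemma LD.moment {Ω : Type*} {mΩ : MeasurableSpace Ω} (P : Measure Ω) [IsProbabilityMeasure P]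
    {F G : Ω → ℝ} (hF : Measurable F) (hG : Measurable G) (hF0 : ∀ ω, 0 ≤ F ω)
    (hG0 : ∀ ω, 0 ≤ G ω)
    (tail : ∀ x : ℝ, 0 < x → ENNReal.ofReal x * P {ω | x ≤ F ω ∧ G ω < x} ≤
      ∫⁻ ω, ENNReal.ofReal (min (G ω) x) ∂P)
    {γ : ℝ} (h0 : 0 < γ) (h1 : γ < 1) :
    ∫⁻ ω, ENNReal.ofReal (F ω ^ γ) ∂P ≤
      ENNReal.ofReal ((2 - γ) / (1 - γ)) * ∫⁻ ω, ENNReal.ofReal (G ω ^ γ) ∂P := by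
  have hγ : 0 < 1 - γ := by linarith
  have bound : ∀ x ∈ Ioi (0:ℝ), P {ω | x ≤ F ω} * ENNReal.ofReal (x ^ (γ - 1)) ≤
      P {ω | x ≤ G ω} * ENNReal.ofReal (x ^ (γ - 1)) +
        ∫⁻ ω, ENNReal.ofReal (min (G ω) x * x ^ (γ - 2)) ∂P := by
    intro x hx
    have hx : 0 < x := hx
    have hsub : P {ω | x ≤ F ω} ≤ P {ω | x ≤ G ω} + P {ω | x ≤ F ω ∧ G ω < x} := by
      refine (measure_mono ?_).trans (measure_union_le _ _)
      intro ω hω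
      rcases le_or_gt x (G ω) with h | h
      · exact Or.inl h
      · exact Or.inr ⟨hω, h⟩
    refine (mul_le_mul_left hsub _).trans ?_
    rw [add_mul]
    refine add_le_add le_rfl ?_
    have e : x ^ (γ - 1) = x * x ^ (γ - 2) := by
      rw [show γ - 1 = 1 + (γ - 2) by ring, Real.rpow_add hx, Real.rpow_one]
    rw [e, ENNReal.ofReal_mul hx.le, ← mul_assoc, mul_comm (P _)]
    refine (mul_le_mul_left (tail x hx) _).trans ?_
    rw [← lintegral_mul_const _ (by fun_prop)]
    refine le_of_eq (lintegral_congr fun ω => ?_)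
    rw [ENNReal.ofReal_mul (le_min (hG0 ω) hx.le)]
  rw [lintegral_rpow_eq_lintegral_meas_le_mul P (Eventually.of_forall hF0) hF.aemeasurable h0]
  have hjm : Measurable (Function.uncurry fun (x : ℝ) ω =>
      ENNReal.ofReal (min (G ω) x * x ^ (γ - 2))) := by
    unfold Function.uncurry
    fun_prop
  calc _ ≤ ENNReal.ofReal γ * ∫⁻ x in Ioi (0:ℝ), (P {ω | x ≤ G ω} * ENNReal.ofReal (x ^ (γ - 1)) +
        ∫⁻ ω, ENNReal.ofReal (min (G ω) x * x ^ (γ - 2)) ∂P) :=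
        mul_le_mul_right (setLIntegral_mono' measurableSet_Ioi bound) _
    _ = ∫⁻ ω, ENNReal.ofReal (G ω ^ γ) ∂P + ENNReal.ofReal γ *
        ∫⁻ ω, (∫⁻ x in Ioi (0:ℝ), ENNReal.ofReal (min (G ω) x * x ^ (γ - 2))) ∂P := by
        have hlm : Measurable fun x : ℝ => ∫⁻ ω, ENNReal.ofReal (min (G ω) x * x ^ (γ - 2)) ∂P :=
          hjm.lintegral_prod_right'
        rw [lintegral_add_right _ hlm, mul_add,
          lintegral_rpow_eq_lintegral_meas_le_mul P (Eventually.of_forall hG0) hG.aemeasurable h0,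
          lintegral_lintegral_swap hjm.aemeasurable]
    _ ≤ ∫⁻ ω, ENNReal.ofReal (G ω ^ γ) ∂P + ENNReal.ofReal γ *
        ∫⁻ ω, ENNReal.ofReal ((1 / γ + 1 / (1 - γ)) * G ω ^ γ) ∂P := by
        gcongr with ω
        exact LD.inner h0 h1 (hG0 ω)
    _ = _ := by
        have hp : 0 ≤ 1 / γ + 1 / (1 - γ) := by positivity
        simp_rw [ENNReal.ofReal_mul hp]
        rw [lintegral_const_mul _ (by fun_prop), ← mul_assoc, ← ENNReal.ofReal_mul h0.le,
          ← one_add_mul, ← ENNReal.ofReal_one, ← ENNReal.ofReal_add zero_le_one (by positivity)]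
        congr 2
        field_simp
        ring

/-- Lemma of Gyöngy–Krylov / Lenglart type. If `f`, `g` are nonnegative
continuous adapted processes on `[0,T]` such that
`E[f_τ 1_{g_0 ≤ c}] ≤ E[g_τ 1_{g_0 ≤ c}]` for every constant `c > 0` and every stopping
time `τ ≤ T`, then for every stopping time `τ ≤ T` and every `γ ∈ (0,1)`,
`E[sup_{t ≤ τ} f_t^γ] ≤ ((2-γ)/(1-γ)) E[sup_{t ≤ τ} g_t^γ]`. -/
theorem lenglart_domination
    {Ω : Type*} {mΩ : MeasurableSpace Ω} (P : Measure Ω) [IsProbabilityMeasure P]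
    (T : ℝ) (hT : 0 ≤ T)
    (𝓕 : Filtration ℝ mΩ)
    (f g : ℝ → Ω → ℝ)
    -- nonnegativity on [0,T]
    (hf0 : ∀ t ∈ Set.Icc (0:ℝ) T, ∀ ω, 0 ≤ f t ω)
    (hg0 : ∀ t ∈ Set.Icc (0:ℝ) T, ∀ ω, 0 ≤ g t ω)
    -- continuity of sample paths on [0,T]
    (hfc : ∀ ω, ContinuousOn (fun t => f t ω) (Set.Icc 0 T))
    (hgc : ∀ ω, ContinuousOn (fun t => g t ω) (Set.Icc 0 T))
    -- adaptedness on [0,T]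
    (hfa : ∀ t ∈ Set.Icc (0:ℝ) T, StronglyMeasurable[𝓕 t] (f t))
    (hga : ∀ t ∈ Set.Icc (0:ℝ) T, StronglyMeasurable[𝓕 t] (g t))
    -- the domination hypothesis
    (hyp : ∀ c : ℝ, 0 < c → ∀ τ : Ω → ℝ, IsStoppingTime 𝓕 (fun ω => (τ ω : WithTop ℝ)) →
      (∀ ω, τ ω ∈ Set.Icc (0:ℝ) T) →
      ∫⁻ ω in {ω | g 0 ω ≤ c}, ENNReal.ofReal (f (τ ω) ω) ∂P ≤
        ∫⁻ ω in {ω | g 0 ω ≤ c}, ENNReal.ofReal (g (τ ω) ω) ∂P) :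
    ∀ τ : Ω → ℝ, IsStoppingTime 𝓕 (fun ω => (τ ω : WithTop ℝ)) → (∀ ω, τ ω ∈ Set.Icc (0:ℝ) T) →
      ∀ γ : ℝ, 0 < γ → γ < 1 →
      ∫⁻ ω, ENNReal.ofReal ((⨆ t ∈ Set.Icc (0:ℝ) (τ ω), f t ω) ^ γ) ∂P ≤
        ENNReal.ofReal ((2 - γ) / (1 - γ)) *
          ∫⁻ ω, ENNReal.ofReal ((⨆ t ∈ Set.Icc (0:ℝ) (τ ω), g t ω) ^ γ) ∂P := by
  intro τ hτ hτm γ h0 h1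
  have hfm : ∀ t ∈ Icc (0:ℝ) T, Measurable (f t) := fun t ht =>
    (hfa t ht).measurable.mono (𝓕.le t) le_rfl
  have hgm : ∀ t ∈ Icc (0:ℝ) T, Measurable (g t) := fun t ht =>
    (hga t ht).measurable.mono (𝓕.le t) le_rfl
  have hτmeas : Measurable τ := by
    refine measurable_of_Iic fun i => ?_
    have := 𝓕.le i _ (hτ i)
    simp only [WithTop.coe_le_coe] at this
    exact this
  have hsub : ∀ ω, Icc (0:ℝ) (τ ω) ⊆ Icc 0 T := fun ω => Icc_subset_Icc_right (hτm ω).2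
  have sF := fun ω => LD.sup_spec (hτm ω).1 ((hfc ω).mono (hsub ω))
    (fun t ht => hf0 t (hsub ω ht) ω)
  have sG := fun ω => LD.sup_spec (hτm ω).1 ((hgc ω).mono (hsub ω))
    (fun t ht => hg0 t (hsub ω ht) ω)
  have mF := LD.measurable_sup hT hf0 hfc hfm hτmeas hτm
  have mG := LD.measurable_sup hT hg0 hgc hgm hτmeas hτm
  set F : Ω → ℝ := fun ω => ⨆ t ∈ Icc (0:ℝ) (τ ω), f t ω with hF
  set G : Ω → ℝ := fun ω => ⨆ t ∈ Icc (0:ℝ) (τ ω), g t ω with hG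
  have sF' : ∀ ω, (∀ t ∈ Icc (0:ℝ) (τ ω), f t ω ≤ F ω) ∧
    ∃ t ∈ Icc (0:ℝ) (τ ω), f t ω = F ω := sF
  have sG' : ∀ ω, (∀ t ∈ Icc (0:ℝ) (τ ω), g t ω ≤ G ω) ∧
    ∃ t ∈ Icc (0:ℝ) (τ ω), g t ω = G ω := sG
  have z : ∀ ω, (0:ℝ) ∈ Icc (0:ℝ) (τ ω) := fun ω => ⟨le_rfl, (hτm ω).1⟩
  have zT : (0:ℝ) ∈ Icc (0:ℝ) T := ⟨le_rfl, hT⟩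
  refine LD.moment P mF mG (fun ω => (hf0 0 zT ω).trans ((sF' ω).1 0 (z ω)))
    (fun ω => (hg0 0 zT ω).trans ((sG' ω).1 0 (z ω))) ?_ h0 h1
  intro x hx
  have hc : ∀ ω, ContinuousOn (fun t => max (f t ω) (g t ω)) (Icc 0 T) := fun ω =>
    ContinuousOn.sup (hfc ω) (hgc ω)
  have hσst := LD.hit_stopping (x := x) (h := fun t ω => max (f t ω) (g t ω)) hc
    (fun t ht => (hfa t ht).measurable.max (hga t ht).measurable) hτ hτm
  have hs := fun ω => LD.hit_spec (x := x) (hτm ω) (hc ω)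
  set σ : Ω → ℝ := fun ω => LD.hit T x (fun t => max (f t ω) (g t ω)) (τ ω) with hσ
  have hs' : ∀ ω, (σ ω ≤ τ ω ∧ 0 ≤ σ ω) ∧
    (∀ t ∈ Icc (0:ℝ) T, x ≤ max (f t ω) (g t ω) → σ ω ≤ t) ∧
    (x ≤ max (f (σ ω) ω) (g (σ ω) ω) ∨ σ ω = τ ω) := hs
  have hσmem : ∀ ω, σ ω ∈ Icc (0:ℝ) (τ ω) := fun ω => ⟨(hs' ω).1.2, (hs' ω).1.1⟩
  have hσT : ∀ ω, σ ω ∈ Icc (0:ℝ) T := fun ω => hsub ω (hσmem ω)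
  have hA : MeasurableSet {ω | x ≤ F ω ∧ G ω < x} :=
    (measurableSet_le measurable_const mF).inter (measurableSet_lt mG measurable_const)
  have hB : MeasurableSet {ω | g 0 ω ≤ x} := measurableSet_le (hgm 0 zT) measurable_const
  calc ENNReal.ofReal x * P {ω | x ≤ F ω ∧ G ω < x}
      = ∫⁻ ω in {ω | x ≤ F ω ∧ G ω < x}, ENNReal.ofReal x ∂P := by rw [setLIntegral_const]
    _ ≤ ∫⁻ ω in {ω | x ≤ F ω ∧ G ω < x}, ENNReal.ofReal (f (σ ω) ω) ∂P := by
        refine setLIntegral_mono' hA fun ω hω => ENNReal.ofReal_le_ofReal ?_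
        have hgs : g (σ ω) ω < x := ((sG' ω).1 _ (hσmem ω)).trans_lt hω.2
        rcases (hs' ω).2.2 with h | h
        · rcases le_max_iff.1 h with h | h
          · exact h
          · linarith
        · obtain ⟨t, ht, he⟩ := (sF' ω).2
          have hxt : x ≤ f t ω := by rw [he]; exact hω.1
          have h3 := (hs' ω).2.1 t (hsub ω ht) (le_max_of_le_left hxt)
          have : t = σ ω := le_antisymm (by rw [h]; exact ht.2) h3
          rw [← this]; exact hxt
    _ ≤ ∫⁻ ω in {ω | g 0 ω ≤ x}, ENNReal.ofReal (f (σ ω) ω) ∂P :=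
        lintegral_mono_set fun ω hω => ((sG' ω).1 0 (z ω)).trans hω.2.le
    _ ≤ ∫⁻ ω in {ω | g 0 ω ≤ x}, ENNReal.ofReal (g (σ ω) ω) ∂P := hyp x hx σ hσst hσT
    _ ≤ ∫⁻ ω in {ω | g 0 ω ≤ x}, ENNReal.ofReal (min (G ω) x) ∂P := by
        refine setLIntegral_mono' hB fun ω hω => ENNReal.ofReal_le_ofReal ?_
        refine le_min ((sG' ω).1 _ (hσmem ω)) ?_
        rcases (hσmem ω).1.eq_or_lt with h | h
        · rw [← h]; exact hω
        · -- before `σ` the process is below `x`; pass to the limit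
          have hsubσ : Icc (0:ℝ) (σ ω) ⊆ Icc 0 T := Icc_subset_Icc_right (hσT ω).2
          have hcl : σ ω ∈ closure (Ico 0 (σ ω)) := by
            rw [closure_Ico h.ne]; exact ⟨h.le, le_rfl⟩
          have hcont : ContinuousWithinAt (fun t => g t ω) (Ico 0 (σ ω)) (σ ω) :=
            ((hgc ω) _ (hσT ω)).mono (Ico_subset_Icc_self.trans hsubσ)
          refine hcont.closure_le hcl continuousWithinAt_const ?_
          intro t ht
          by_contra! hlt
          exact absurd ((hs' ω).2.1 t (hsubσ ⟨ht.1, ht.2.le⟩) (le_max_of_le_right hlt.le))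
            (not_le.2 ht.2)
    _ ≤ ∫⁻ ω, ENNReal.ofReal (min (G ω) x) ∂P := setLIntegral_le_lintegral _ _
end

section
/- Let T > 0 and let β : [0,T] × (ℝ^d)^k × ℝ^d → ℝ^d and α : [0,T] × (ℝ^d)^k × ℝ^d → ℝ^{d×m} be Borel measurable and satisfy: for every integer l ≥ 1 there exists a nonnegative integrable function L_l on [0,T] such that 2 (x−z)·(β(t,y,x) − β(t,y,z)) + |α(t,y,x) − α(t,y,z)|² ≤ L_l(t) |x−z|² for all t ∈ [0,T] and all x, z, y with |x| < l, |z| < l, |y| < l. Let (Ω, 𝓕, P) be a probability space and let S : Ω → [0,∞) be an almost surely finite random variable. Then for every R > 0 there exists a jointly measurable function 𝓛 : [0,T] × Ω → [0,∞), with 𝓛(t,·) measurable with respect to σ(S) for every t, such that ∫_0^T 𝓛(t,ω) dt < ∞ for P-almost every ω, and 2 (x−z)·(β(t,y,x) − β(t,y,z)) + |α(t,y,x) − α(t,y,z)|² ≤ 𝓛(t,ω) |x−z|² for all t ∈ [0,T], all x, z with |x| < R, |z| < R, all y with |y| ≤ S(ω), and P-almost every ω. -/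
open MeasureTheory ProbabilityTheory Filter Set
open scoped RealInnerProductSpace

/-- randomization of the local monotonicity condition (C3). If for
every integer `l ≥ 1` there is a nonnegative integrable `L_l` with
`2(x−z)·(β(t,y,x)−β(t,y,z)) + |α(t,y,x)−α(t,y,z)|² ≤ L_l(t)|x−z|²` for `|x|,|z|,|y| < l`,
and `S` is a nonnegative (a.s. finite) random variable, then for every `R > 0` there is a
jointly measurable, σ(S)-measurable-in-ω, a.s. integrable-in-t random coefficient
`𝓛(t,ω)` for which the same monotonicity estimate holds for `|x|,|z| < R`, `|y| ≤ S(ω)`,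
almost surely. -/
theorem randomized_monotonicity_C3
    {Ω : Type*} [MeasureSpace Ω] [IsProbabilityMeasure (ℙ : Measure Ω)]
    (d k m : ℕ) (T : ℝ) (hT : 0 < T)
    (β : ℝ → EuclideanSpace ℝ (Fin k × Fin d) → EuclideanSpace ℝ (Fin d) →
      EuclideanSpace ℝ (Fin d))
    (α : ℝ → EuclideanSpace ℝ (Fin k × Fin d) → EuclideanSpace ℝ (Fin d) →
      EuclideanSpace ℝ (Fin d × Fin m))
    (hβm : Measurable fun p : ℝ × EuclideanSpace ℝ (Fin k × Fin d) ×
      EuclideanSpace ℝ (Fin d) => β p.1 p.2.1 p.2.2)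
    (hαm : Measurable fun p : ℝ × EuclideanSpace ℝ (Fin k × Fin d) ×
      EuclideanSpace ℝ (Fin d) => α p.1 p.2.1 p.2.2)
    -- the local monotonicity condition (C3), for integer radii l ≥ 1
    (hL : ∀ l : ℕ, 1 ≤ l → ∃ L : ℝ → ℝ, Measurable L ∧ (∀ t, 0 ≤ L t) ∧
      IntegrableOn L (Set.Icc 0 T) ∧
      ∀ t ∈ Set.Icc (0:ℝ) T, ∀ y x z, ‖x‖ < (l:ℝ) → ‖z‖ < (l:ℝ) → ‖y‖ < (l:ℝ) →
        2 * ⟪x - z, β t y x - β t y z⟫ + ‖α t y x - α t y z‖ ^ 2 ≤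
          L t * ‖x - z‖ ^ 2)
    -- the almost surely finite nonnegative random variable S
    (S : Ω → ℝ) (hS : ∀ ω, 0 ≤ S ω) (hSm : Measurable S) :
    ∀ R : ℝ, 0 < R → ∃ 𝓛 : ℝ → Ω → ℝ, (∀ t ω, 0 ≤ 𝓛 t ω) ∧
      (Measurable fun p : ℝ × Ω => 𝓛 p.1 p.2) ∧
      (∀ t, Measurable[MeasurableSpace.comap S Real.measurableSpace] (𝓛 t)) ∧
      (∀ᵐ ω ∂(ℙ : Measure Ω), IntegrableOn (fun t => 𝓛 t ω) (Set.Icc 0 T)) ∧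
      (∀ᵐ ω ∂(ℙ : Measure Ω), ∀ t ∈ Set.Icc (0:ℝ) T, ∀ y x z,
        ‖x‖ < R → ‖z‖ < R → ‖y‖ ≤ S ω →
        2 * ⟪x - z, β t y x - β t y z⟫ + ‖α t y x - α t y z‖ ^ 2 ≤
          𝓛 t ω * ‖x - z‖ ^ 2) := by
  intro R hR
  choose L hLm hL0 hLi hLe using fun n : ℕ => hL (n + 1) (Nat.le_add_left 1 n)
  have hJ : Measurable fun p : ℝ × ℕ => L p.2 p.1 :=
    measurable_from_prod_countable_left fun n => hLm n
  have hN : Measurable fun s : ℝ => ⌈R⌉₊ + ⌊s⌋₊ := Nat.measurable_floor.const_add _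
  have hG : Measurable fun p : ℝ × ℝ => L (⌈R⌉₊ + ⌊p.2⌋₊) p.1 :=
    hJ.comp (measurable_fst.prodMk (hN.comp measurable_snd))
  refine ⟨fun t ω => L (⌈R⌉₊ + ⌊S ω⌋₊) t, fun t ω => hL0 _ _, ?_, ?_, ?_, ?_⟩
  · exact hG.comp (measurable_fst.prodMk (hSm.comp measurable_snd))
  · intro t
    have h1 : Measurable fun s : ℝ => L (⌈R⌉₊ + ⌊s⌋₊) t :=
      hG.comp (measurable_const.prodMk measurable_id)
    exact h1.comp (comap_measurable S)
  · exact Eventually.of_forall fun ω => hLi _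
  · refine Eventually.of_forall fun ω t ht y x z hx hz hy => ?_
    have h1 : R ≤ (⌈R⌉₊ : ℝ) := Nat.le_ceil R
    have h2 : S ω < (⌊S ω⌋₊ : ℝ) + 1 := Nat.lt_floor_add_one _
    have h3 : (0 : ℝ) ≤ (⌊S ω⌋₊ : ℝ) := Nat.cast_nonneg _
    apply hLe _ t ht y x z <;> push_cast <;> linarith
end

section
/- Let (Ω, 𝓕, P) be a probability space and T > 0. For each integer n ≥ 1 let L_n : [0,T] × Ω → [0,∞) be jointly measurable with ∫_0^T L_n(t,ω) dt < ∞ for P-almost every ω, and assume there exist nonnegative random variables η_n with η_n → 0 almost surely such that ∫_0^T L_n(t,ω) dt ≤ η_n(ω) · ln n for all n ≥ 2 and P-almost every ω. Fix ε > 0 and for each integer N ≥ 2 define ρ_N(ω) := inf{ t ∈ [0,T] : sup_{n ≥ N} (ln n)^{−1} ∫_0^t L_n(s,ω) ds ≥ ε } (with inf ∅ := T). Then: (a) for P-almost every ω, the random variable ψ_N(ω) := sup_{n ≥ 1} n^{−ε} exp( ∫_0^{ρ_N(ω)} L_n(s,ω) ds ) is finite, so that exp( ∫_0^{ρ_N}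 L_n(s) ds ) ≤ ψ_N · n^{ε} for all n ≥ 1 almost surely; and (b) lim_{N→∞} P(ρ_N < T) = 0. -/
open MeasureTheory ProbabilityTheory Filter Set

/-- localization of `∫_0^T L_n dt = o(ln n)`. If
`∫_0^T L_n(t,ω) dt ≤ η_n(ω) ln n` for all `n ≥ 2` a.s. with `η_n → 0` a.s., and `ρ_N` is
the hitting time of level `ε` by `sup_{n ≥ N} (ln n)⁻¹ ∫_0^t L_n ds` (with
`inf ∅ := T`), then (a) almost surely
`ψ_N := sup_{n ≥ 1} n^{-ε} exp(∫_0^{ρ_N} L_n ds)` is finite and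
`exp(∫_0^{ρ_N} L_n ds) ≤ ψ_N n^ε` for all `n ≥ 1`, and (b) `P(ρ_N < T) → 0` as
`N → ∞`. -/
theorem localization_L_little_o
    {Ω : Type*} [MeasureSpace Ω] [IsProbabilityMeasure (ℙ : Measure Ω)]
    (T : ℝ) (hT : 0 < T)
    (L : ℕ → ℝ → Ω → ℝ)
    (hL0 : ∀ n t ω, 0 ≤ L n t ω)
    (hLm : ∀ n, Measurable fun p : ℝ × Ω => L n p.1 p.2)
    (hLint : ∀ n, ∀ᵐ ω ∂(ℙ : Measure Ω), IntegrableOn (fun t => L n t ω) (Set.Icc 0 T))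
    -- the o(ln n) bound with a.s. vanishing nonnegative random variables η_n
    (η : ℕ → Ω → ℝ) (hη0 : ∀ n ω, 0 ≤ η n ω)
    (hηtend : ∀ᵐ ω ∂(ℙ : Measure Ω), Tendsto (fun n => η n ω) atTop (nhds 0))
    (hbound : ∀ᵐ ω ∂(ℙ : Measure Ω), ∀ n : ℕ, 2 ≤ n →
      (∫ t in Set.Ioc (0:ℝ) T, L n t ω) ≤ η n ω * Real.log n)
    (ε : ℝ) (hε : 0 < ε)
    -- the stopping times ρ_N (with inf ∅ := T)
    (ρ : ℕ → Ω → ℝ)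
    (hρ : ∀ N ω, ρ N ω = sInf ({t ∈ Set.Icc (0:ℝ) T |
      ε ≤ ⨆ n : ℕ, ⨆ _ : N ≤ n,
        (Real.log n)⁻¹ * ∫ s in Set.Ioc (0:ℝ) t, L n s ω} ∪ {T})) :
    (∀ N : ℕ, 2 ≤ N → ∀ᵐ ω ∂(ℙ : Measure Ω),
      BddAbove (Set.range fun n : ℕ => ⨆ _ : 1 ≤ n,
        (n : ℝ) ^ (-ε) * Real.exp (∫ s in Set.Ioc (0:ℝ) (ρ N ω), L n s ω)) ∧
      ∀ n : ℕ, 1 ≤ n →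
        Real.exp (∫ s in Set.Ioc (0:ℝ) (ρ N ω), L n s ω) ≤
          (⨆ n' : ℕ, ⨆ _ : 1 ≤ n',
            (n' : ℝ) ^ (-ε) * Real.exp (∫ s in Set.Ioc (0:ℝ) (ρ N ω), L n' s ω)) *
            (n : ℝ) ^ ε) ∧
    Tendsto (fun N : ℕ => (ℙ : Measure Ω) {ω | ρ N ω < T}) atTop (nhds 0) := by
  have hmono : ∀ n ω t, t ≤ T → IntegrableOn (fun t => L n t ω) (Set.Icc 0 T) →
      (∫ s in Set.Ioc (0:ℝ) t, L n s ω) ≤ ∫ s in Set.Ioc (0:ℝ) T, L n s ω := by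
    intro n ω t ht hi
    exact setIntegral_mono_set (hi.mono_set Ioc_subset_Icc_self)
      (Eventually.of_forall fun s => hL0 n s ω) (Ioc_subset_Ioc_right ht).eventuallyLE
  have hρT : ∀ N ω, ρ N ω ≤ T := by
    intro N ω
    rw [hρ]
    refine csInf_le ⟨0, ?_⟩ (Or.inr rfl)
    rintro x (hx | hx)
    · exact hx.1.1
    · rw [Set.mem_singleton_iff.1 hx]; exact hT.le
  have hint : ∀ᵐ ω ∂(ℙ : Measure Ω), ∀ n, IntegrableOn (fun t => L n t ω) (Set.Icc 0 T) :=
    ae_all_iff.2 hLint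
  refine ⟨?_, ?_⟩
  · intro N _
    filter_upwards [hint, hηtend, hbound] with ω hi he hb
    have hbdd : BddAbove (Set.range fun n : ℕ => ⨆ _ : 1 ≤ n,
        (n : ℝ) ^ (-ε) * Real.exp (∫ s in Set.Ioc (0:ℝ) (ρ N ω), L n s ω)) := by
      apply Filter.IsBoundedUnder.bddAbove_range
      refine ⟨1, ?_⟩
      rw [eventually_map]
      filter_upwards [he.eventually (gt_mem_nhds hε), eventually_ge_atTop 2] with n hn h2
      have h1 : 1 ≤ n := by omega
      have hn0 : (0:ℝ) < n := by exact_mod_cast h1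
      have hl : 0 ≤ Real.log n := Real.log_natCast_nonneg n
      rw [ciSup_pos h1, Real.rpow_def_of_pos hn0, ← Real.exp_add, Real.exp_le_one_iff]
      have := hmono n ω _ (hρT N ω) (hi n)
      have := hb n h2
      nlinarith [mul_le_mul_of_nonneg_right hn.le hl]
    refine ⟨hbdd, fun n hn => ?_⟩
    have hn0 : (0:ℝ) < n := by exact_mod_cast hn
    have h := le_ciSup hbdd n
    simp only [ciSup_pos hn] at h
    have h' := mul_le_mul_of_nonneg_right h (Real.rpow_nonneg hn0.le ε)
    refine le_trans (le_of_eq ?_) h'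
    rw [mul_right_comm, ← Real.rpow_add hn0]
    simp
  · set I : ℕ → Ω → ℝ := fun n ω => ∫ t in Set.Ioc (0:ℝ) T, L n t ω with hI
    have hIm : ∀ n, Measurable (I n) := by
      intro n
      have : StronglyMeasurable (fun p : Ω × ℝ => L n p.2 p.1) :=
        ((hLm n).comp measurable_swap).stronglyMeasurable
      exact (this.integral_prod_right' (ν := volume.restrict (Set.Ioc (0:ℝ) T))).measurable
    set A : ℕ → Set Ω := fun N => ⋃ n, ⋃ _ : N ≤ n, {ω | ε / 2 * Real.log n < I n ω} with hA
    have hAm : ∀ N, MeasurableSet (A N) := fun N =>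
      MeasurableSet.iUnion fun n => MeasurableSet.iUnion fun _ =>
        measurableSet_lt measurable_const (hIm n)
    have hAanti : Antitone A := by
      intro N M h ω hω
      simp only [hA, Set.mem_iUnion] at hω ⊢
      obtain ⟨n, hn, hx⟩ := hω
      exact ⟨n, h.trans hn, hx⟩
    have hA0 : (ℙ : Measure Ω) (⋂ N, A N) = 0 := by
      rw [← compl_compl (⋂ N, A N), ← mem_ae_iff]
      filter_upwards [hηtend, hbound] with ω he hb hω
      obtain ⟨M, hM⟩ := eventually_atTop.1
        ((he.eventually (gt_mem_nhds (half_pos hε))).and (eventually_ge_atTop 2))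
      have := Set.mem_iInter.1 hω M
      simp only [hA, Set.mem_iUnion] at this
      obtain ⟨n, hn, hx⟩ := this
      have h1 := hb n (hM n hn).2
      have hl : 0 ≤ Real.log n := Real.log_natCast_nonneg n
      have h2 := mul_le_mul_of_nonneg_right (hM n hn).1.le hl
      exact absurd hx (not_lt.2 (h1.trans h2))
    have hlim := tendsto_measure_iInter_atTop (μ := (ℙ : Measure Ω))
      (fun N => (hAm N).nullMeasurableSet) hAanti ⟨0, measure_ne_top _ _⟩
    rw [hA0] at hlim
    refine tendsto_of_tendsto_of_tendsto_of_le_of_le' tendsto_const_nhds hlim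
      (Eventually.of_forall fun _ => zero_le) ?_
    filter_upwards [eventually_ge_atTop 2] with N hN
    apply measure_mono_ae
    filter_upwards [hint] with ω hi hω
    by_contra hnA
    have hnA' : ∀ n, N ≤ n → I n ω ≤ ε / 2 * Real.log n := by
      intro n hn
      by_contra hc
      exact hnA (Set.mem_iUnion.2 ⟨n, Set.mem_iUnion.2 ⟨hn, not_le.1 hc⟩⟩)
    have hω' : ρ N ω < T := hω
    have hT' : T ≤ ρ N ω := by
      rw [hρ]
      refine le_csInf ⟨T, Or.inr rfl⟩ ?_
      rintro t (⟨ht, hsup⟩ | ht)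
      · exfalso
        have : (⨆ n : ℕ, ⨆ _ : N ≤ n,
            (Real.log n)⁻¹ * ∫ s in Set.Ioc (0:ℝ) t, L n s ω) ≤ ε / 2 := by
          refine ciSup_le fun n => Real.iSup_le (fun hn => ?_) (half_pos hε).le
          have hl : 0 < Real.log n := Real.log_pos (by exact_mod_cast (by omega : 1 < n))
          rw [inv_mul_le_iff₀ hl, mul_comm]
          exact (hmono n ω t ht.2 (hi n)).trans (hnA' n hn)
        linarith
      · exact (Set.mem_singleton_iff.1 ht).ge
    exact absurd hω' (not_lt.2 hT')
end
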